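/- No topological space definable in an o-minimal structure is homeomorphic to the one-point compactification of the rational numbers ℚ (with ℚ carrying its usual order topology). -/

import Mathlib

open FirstOrder FirstOrder.Language Set Cardinal Filter Topology

universe u

/-- A subset of a linear order is a finite union of points and open intervals
with endpoints in `M ∪ {-∞, +∞}` (lower endpoints in `WithBot M = M ∪ {-∞}`,
upper endpoints in `WithTop M = M ∪ {+∞}`). -/
def IsFinUnionPointsIntervals {M : Type*} [LinearOrder M] (s : Set M) : Prop :=
  ∃ (P : Finset M) (I : Finset (WithBot M × WithTop M)),
    s = ↑P ∪ ⋃ p ∈ I, {x : M | p.1 < (x : WithBot M) ∧ (x : WithTop M) < p.2}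

/-- `M` is an o-minimal `L`-structure: the language defines the linear order of `M`,
which is dense and without endpoints, and every subset of `M` definable with parameters
is a finite union of points and open intervals with endpoints in `M ∪ {-∞, +∞}`. -/
structure IsOMinimal (L : FirstOrder.Language) (M : Type*) [L.Structure M] [LinearOrder M] :
    Prop where
  denselyOrdered : DenselyOrdered M
  noMinOrder : NoMinOrder M
  noMaxOrder : NoMaxOrder M
  definable_lt : (∅ : Set M).Definable L {x : Fin 2 → M | x 0 < x 1}
  tame : ∀ s : Set M, (Set.univ : Set M).Definable₁ L s → IsFinUnionPointsIntervals s

/-- A topological space `(A, t)` is definable in the structure `M` when `A ⊆ M^n` is a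
definable set and the topology `t` admits a definable basis, i.e. a basis of the form
`{ψ(A;b) : b ∈ S}` for some formula `ψ(x;y)` and definable set `S ⊆ M^|y|`. -/
def IsDefinableTopSpace (L : FirstOrder.Language) {M : Type*} [L.Structure M] {n : ℕ}
    (A : Set (Fin n → M)) (t : TopologicalSpace A) : Prop :=
  (Set.univ : Set M).Definable L A ∧
  ∃ (k : ℕ) (ψ : L.Formula (Fin n ⊕ Fin k)) (S : Set (Fin k → M)),
    (Set.univ : Set M).Definable L S ∧
    @TopologicalSpace.IsTopologicalBasis A t
      ((fun b => {x : A | ψ.Realize (Sum.elim (x : Fin n → M) b)}) '' S)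

/-!
A countable space definable in an o-minimal structure is second countable, whereas the one-point
compactification of `ℚ` is countable but not second countable. Indeed, a definable family of sets
leaves only countably many traces on a countable definable set `X`, by induction on the number of
parameters. For fixed other parameters, the sets of values `y` of one parameter which select a
given `x ∈ X` are finite unions of points and intervals, and so is the set of all their endpoints.
If `y` is an endpoint of the set of some `x₀ ∈ X`, then `x₀` and the rank of `y` among the endpoints
of that set determine `y`; otherwise the trace depends only on which component of the complement
of the set of all endpoints contains `y`. In both cases the trace is described by two natural
numbers and a point of `X`, so that one parameter is traded for a second copy of `X`.
-/

section Subdivision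

variable {M : Type*} [LinearOrder M] {ι : Type*} {P Q S T : Set M}

/-- The points of `P` subdivide `T`: membership in `T` is constant on every closed interval
which misses `P`. -/
def Subdivides (P T : Set M) : Prop :=
  ∀ ⦃y z⦄, Disjoint P (uIcc y z) → (y ∈ T ↔ z ∈ T)

namespace Subdivides

lemma mono (h : Subdivides P T) (hPQ : P ⊆ Q) : Subdivides Q T :=
  fun _ _ hyz => h (hyz.mono_left hPQ)

lemma of_forall_le (h : ∀ ⦃y z⦄, y ≤ z → Disjoint P (Icc y z) → (y ∈ T ↔ z ∈ T)) :
    Subdivides P T := by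
  intro y z hyz
  rcases le_total y z with hle | hle
  · exact h hle (uIcc_of_le hle ▸ hyz)
  · exact (h hle (uIcc_of_ge hle ▸ hyz)).symm

lemma self (P : Set M) : Subdivides P P := fun _ _ hyz =>
  iff_of_false (hyz.notMem_of_mem_right left_mem_uIcc) (hyz.notMem_of_mem_right right_mem_uIcc)

lemma union (hS : Subdivides P S) (hT : Subdivides Q T) : Subdivides (P ∪ Q) (S ∪ T) :=
  fun _ _ hyz => or_congr (hS (hyz.mono_left subset_union_left))
    (hT (hyz.mono_left subset_union_right))

lemma inter (hS : Subdivides P S) (hT : Subdivides Q T) : Subdivides (P ∪ Q) (S ∩ T) :=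
  fun _ _ hyz => and_congr (hS (hyz.mono_left subset_union_left))
    (hT (hyz.mono_left subset_union_right))

lemma biUnion {I : Set ι} {B F : ι → Set M} (h : ∀ i ∈ I, Subdivides (B i) (F i)) :
    Subdivides (⋃ i ∈ I, B i) (⋃ i ∈ I, F i) := by
  intro y z hyz
  simp only [mem_iUnion]
  exact exists_congr fun i => exists_congr fun hi =>
    h i hi (hyz.mono_left (subset_biUnion_of_mem hi))

lemma coe_preimage_Ioi (a : WithBot M) :
    Subdivides ((↑) ⁻¹' {a}) {x : M | a < (x : WithBot M)} := by
  refine of_forall_le fun y z hyz hdisj => ⟨fun hy => ?_, fun hz => ?_⟩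
  · exact lt_of_lt_of_le (b := (y : WithBot M)) hy (WithBot.coe_le_coe.2 hyz)
  induction a with
  | bot => exact WithBot.bot_lt_coe y
  | coe m =>
    have hm : m ∉ Icc y z := hdisj.notMem_of_mem_left rfl
    have hmz : m < z := WithBot.coe_lt_coe.1 hz
    exact WithBot.coe_lt_coe.2 (not_le.1 fun hym => hm ⟨hym, hmz.le⟩)

lemma coe_preimage_Iio (b : WithTop M) :
    Subdivides ((↑) ⁻¹' {b}) {x : M | (x : WithTop M) < b} := by
  refine of_forall_le fun y z hyz hdisj => ⟨fun hy => ?_, fun hz => ?_⟩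
  swap
  · exact lt_of_le_of_lt (b := (z : WithTop M)) (WithTop.coe_le_coe.2 hyz) hz
  induction b with
  | top => exact WithTop.coe_lt_top z
  | coe m =>
    have hm : m ∉ Icc y z := hdisj.notMem_of_mem_left rfl
    have hym : y < m := WithTop.coe_lt_coe.1 hy
    exact WithTop.coe_lt_coe.2 (not_le.1 fun hmz => hm ⟨hym.le, hmz⟩)

end Subdivides

lemma IsFinUnionPointsIntervals.exists_finite_subdivides (hT : IsFinUnionPointsIntervals T) :
    ∃ P : Set M, P.Finite ∧ Subdivides P T := by
  obtain ⟨points, intervals, rfl⟩ := hT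
  refine ⟨_, ?_, (Subdivides.self (points : Set M)).union <| Subdivides.biUnion
    (I := (intervals : Set (WithBot M × WithTop M))) fun p _ =>
      (Subdivides.coe_preimage_Ioi p.1).inter (Subdivides.coe_preimage_Iio p.2)⟩
  refine points.finite_toSet.union (intervals.finite_toSet.biUnion fun p _ => .union ?_ ?_)
  · exact (finite_singleton p.1).preimage WithBot.coe_injective.injOn
  · exact (finite_singleton p.2).preimage WithTop.coe_injective.injOn

end Subdivision

section Frontier

lemma notMem_frontier_iff_eventually {Y : Type*} [TopologicalSpace Y] {T : Set Y} {y : Y} :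
    y ∉ frontier T ↔ ∀ᶠ z in 𝓝 y, (z ∈ T ↔ y ∈ T) := by
  rw [← mem_compl_iff, compl_frontier_eq_union_interior]
  simp only [mem_union, mem_interior_iff_mem_nhds]
  by_cases hy : y ∈ T
  · have : Tᶜ ∉ 𝓝 y := fun h => mem_of_mem_nhds h hy
    simp only [hy, iff_true, this, or_false]
    rfl
  · have : T ∉ 𝓝 y := fun h => hy (mem_of_mem_nhds h)
    simp only [hy, iff_false, this, false_or]
    rfl

variable {M : Type*} [LinearOrder M] [TopologicalSpace M] [OrderTopology M] {P Q T : Set M}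

lemma Subdivides.frontier_subset [NoMinOrder M] [NoMaxOrder M] (h : Subdivides P T)
    (hP : IsClosed P) : frontier T ⊆ P := by
  refine fun y hy => by_contra fun hyP => ?_
  obtain ⟨a, b, hyab, hab⟩ := mem_nhds_iff_exists_Ioo_subset.1 (hP.isOpen_compl.mem_nhds hyP)
  refine notMem_frontier_iff_eventually.2 ?_ hy
  filter_upwards [Ioo_mem_nhds hyab.1 hyab.2] with z hz
  exact h (disjoint_right.2 fun w hw => hab (ordConnected_Ioo.uIcc_subset hz hyab hw))

lemma IsFinUnionPointsIntervals.finite_frontier [NoMinOrder M] [NoMaxOrder M]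
    (hT : IsFinUnionPointsIntervals T) : (frontier T).Finite := by
  obtain ⟨P, hP, hPT⟩ := hT.exists_finite_subdivides
  exact hP.subset (hPT.frontier_subset hP.isClosed)

variable [DenselyOrdered M]

lemma Subdivides.mem_iff_mem_of_insert {p y : M} (h : Subdivides (insert p P) T)
    (hp : p ∉ frontier T) (hyp : Disjoint P (uIcc y p)) : y ∈ T ↔ p ∈ T := by
  have hnear := notMem_frontier_iff_eventually.1 hp
  have iff_of_between {w : M} (hw : w ∈ uIcc y p) (hpw : p ∉ uIcc y w) (hwp : w ∈ T ↔ p ∈ T) :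
      y ∈ T ↔ p ∈ T :=
    (h (disjoint_insert_left.2 ⟨hpw, hyp.mono_right (uIcc_subset_uIcc_left hw)⟩)).trans hwp
  rcases lt_trichotomy y p with hlt | rfl | hgt
  · have := nhdsLT_neBot_of_exists_lt ⟨y, hlt⟩
    obtain ⟨w, hwp, hyw, hwltp⟩ :=
      ((hnear.filter_mono nhdsWithin_le_nhds).and (Ioo_mem_nhdsLT hlt)).exists
    refine iff_of_between (Icc_subset_uIcc ⟨hyw.le, hwltp.le⟩) ?_ hwp
    rw [uIcc_of_le hyw.le]
    exact fun hpw => hpw.2.not_gt hwltp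
  · rfl
  · have := nhdsGT_neBot_of_exists_gt ⟨y, hgt⟩
    obtain ⟨w, hwp, hpltw, hwy⟩ :=
      ((hnear.filter_mono nhdsWithin_le_nhds).and (Ioo_mem_nhdsGT hgt)).exists
    refine iff_of_between (Icc_subset_uIcc' ⟨hpltw.le, hwy.le⟩) ?_ hwp
    rw [uIcc_of_ge hwy.le]
    exact fun hpw => hpw.1.not_gt hpltw

lemma Subdivides.of_insert_of_notMem_frontier {p : M} (h : Subdivides (insert p P) T)
    (hp : p ∉ frontier T) : Subdivides P T := by
  intro y z hyz
  by_cases hpyz : p ∈ uIcc y z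
  · have hyp : Disjoint P (uIcc y p) := hyz.mono_right (uIcc_subset_uIcc_left hpyz)
    have hzp : Disjoint P (uIcc z p) :=
      hyz.mono_right (uIcc_comm p z ▸ uIcc_subset_uIcc_right hpyz)
    exact (h.mem_iff_mem_of_insert hp hyp).trans (h.mem_iff_mem_of_insert hp hzp).symm
  · exact h (disjoint_insert_left.2 ⟨hpyz, hyz⟩)

lemma Subdivides.of_union_of_disjoint_frontier (hP : P.Finite) (hPT : Disjoint P (frontier T))
    (h : Subdivides (P ∪ Q) T) : Subdivides Q T := by
  induction P, hP using Set.Finite.induction_on with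
  | empty => rwa [empty_union] at h
  | insert _ _ ih =>
    rw [disjoint_insert_left] at hPT
    rw [insert_union] at h
    exact ih hPT.2 (h.of_insert_of_notMem_frontier hPT.1)

lemma IsFinUnionPointsIntervals.subdivides_frontier (hT : IsFinUnionPointsIntervals T) :
    Subdivides (frontier T) T := by
  obtain ⟨P, hP, hPT⟩ := hT.exists_finite_subdivides
  refine Subdivides.of_union_of_disjoint_frontier (P := P \ frontier T) hP.sdiff
    disjoint_sdiff_left (hPT.mono ?_)
  rw [sdiff_union_self]
  exact subset_union_left

end Frontier

section Cells

variable {M : Type*} [LinearOrder M] {P : Set M} {m n : ℕ} {y z : M}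

/-- The cell of the subdivision of the line by the points of `P` consisting of those `y` with
exactly `m` points of `P` strictly below them and `n` points of `P` weakly below them. For finite
`P` it is empty, a point of `P` (when `n = m + 1`) or an interval between consecutive points of `P`
(when `n = m`). -/
def cell (P : Set M) (m n : ℕ) : Set M :=
  {y | (P ∩ Iio y).encard = m ∧ (P ∩ Iic y).encard = n}

lemma exists_mem_cell (hP : P.Finite) (y : M) : ∃ m n, y ∈ cell P m n :=
  ⟨_, _, (hP.inter_of_left _).cast_ncard_eq.symm, (hP.inter_of_left _).cast_ncard_eq.symm⟩

lemma eq_or_disjoint_uIcc_of_mem_cell (hP : P.Finite) (hy : y ∈ cell P m n) (hz : z ∈ cell P m n) :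
    y = z ∨ Disjoint P (uIcc y z) := by
  wlog hyz : y ≤ z generalizing y z
  · rw [eq_comm, uIcc_comm]
    exact this hz hy (le_of_not_ge hyz)
  have hIio : P ∩ Iio y = P ∩ Iio z := (hP.inter_of_left _).eq_of_subset_of_encard_le
    (inter_subset_inter_right _ (Iio_subset_Iio hyz)) (hz.1.trans hy.1.symm).le
  have hIic : P ∩ Iic y = P ∩ Iic z := (hP.inter_of_left _).eq_of_subset_of_encard_le
    (inter_subset_inter_right _ (Iic_subset_Iic.2 hyz)) (hz.2.trans hy.2.symm).le
  rw [uIcc_of_le hyz, or_iff_not_imp_right, not_disjoint_iff]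
  rintro ⟨p, hp, hyp, hpz⟩
  have hpy : p ≤ y := (hIic.ge ⟨hp, hpz⟩).2
  have hzp : z ≤ p := not_lt.1 fun hlt => (hIio.ge ⟨hp, hlt⟩).2.not_ge hyp
  exact hyz.antisymm (hzp.trans hpy)

variable [TopologicalSpace M] {ι : Type*} {I : Set ι} {F : ι → Set M}

/-- The points at which the subdivision attached to the member `F i` of a family `(F j)_{j ∈ I}`
breaks the line: the endpoints of `F i`, and those of the set of endpoints of all members. -/
def breakpoints (I : Set ι) (F : ι → Set M) (i : ι) : Set M :=
  frontier (F i) ∪ frontier (⋃ j ∈ I, frontier (F j))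

lemma mem_iff_mem_of_disjoint_breakpoints {i j : ι}
    (hF : ∀ j ∈ I, Subdivides (frontier (F j)) (F j))
    (hE : Subdivides (frontier (⋃ j ∈ I, frontier (F j))) (⋃ j ∈ I, frontier (F j)))
    (hyz : Disjoint (breakpoints I F i) (uIcc y z)) (hy : y ∉ ⋃ j ∈ I, frontier (F j))
    (hj : j ∈ I) : y ∈ F j ↔ z ∈ F j := by
  refine hF j hj (disjoint_right.2 fun w hw hwj => hy ?_)
  have hyw : Disjoint (frontier (⋃ j ∈ I, frontier (F j))) (uIcc y w) :=
    (hyz.mono_left subset_union_right).mono_right (uIcc_subset_uIcc_left hw)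
  exact (hE hyw).2 (mem_biUnion hj hwj)

/-- An endpoint `y` of some `F i` is a cell of its own for `breakpoints I F i`; any other `y` has
a cell free of endpoints. -/
lemma exists_cell_inter_nonempty_iff_mem (hI : I.Nonempty)
    (hfin : ∀ i ∈ I, (breakpoints I F i).Finite)
    (hF : ∀ j ∈ I, Subdivides (frontier (F j)) (F j))
    (hE : Subdivides (frontier (⋃ j ∈ I, frontier (F j))) (⋃ j ∈ I, frontier (F j))) (y : M) :
    ∃ i ∈ I, ∃ m n, ∀ j ∈ I, (cell (breakpoints I F i) m n ∩ F j).Nonempty ↔ y ∈ F j := by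
  suffices ∃ i ∈ I, ∀ z, Disjoint (breakpoints I F i) (uIcc y z) → ∀ j ∈ I, (y ∈ F j ↔ z ∈ F j) by
    obtain ⟨i, hi, hconst⟩ := this
    obtain ⟨m, n, hy⟩ := exists_mem_cell (hfin i hi) y
    refine ⟨i, hi, m, n, fun j hj => ⟨?_, fun hyj => ⟨y, hy, hyj⟩⟩⟩
    rintro ⟨z, hz, hzj⟩
    rcases eq_or_disjoint_uIcc_of_mem_cell (hfin i hi) hy hz with rfl | hyz
    · exact hzj
    · exact (hconst z hyz j hj).2 hzj
  by_cases hy : y ∈ ⋃ j ∈ I, frontier (F j)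
  · obtain ⟨i, hi, hyi⟩ := mem_iUnion₂.1 hy
    exact ⟨i, hi, fun z hyz => absurd (Or.inl hyi) (hyz.notMem_of_mem_right left_mem_uIcc)⟩
  · obtain ⟨i, hi⟩ := hI
    exact ⟨i, hi, fun z hyz j hj => mem_iff_mem_of_disjoint_breakpoints hF hE hyz hy hj⟩

end Cells

section DefinableFamily

variable {L : FirstOrder.Language} {M : Type*} [L.Structure M] {A : Set M} {β γ : Type*}

/-- A family of subsets of `M` indexed by tuples is definable over the parameter set `A`. As for
graphs of functions in Mathlib, the index `none : Option β` stands for the variable of the fibers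
`F v`. -/
def DefinableFamily (A : Set M) (L : FirstOrder.Language) [L.Structure M]
    (F : (β → M) → Set M) : Prop :=
  A.Definable L {w : Option β → M | w none ∈ F (w ∘ some)}

namespace DefinableFamily

variable {F G : (β → M) → Set M}

lemma union (hF : DefinableFamily A L F) (hG : DefinableFamily A L G) :
    DefinableFamily A L fun v => F v ∪ G v :=
  Definable.union hF hG

lemma inter (hF : DefinableFamily A L F) (hG : DefinableFamily A L G) :
    DefinableFamily A L fun v => F v ∩ G v :=
  Definable.inter hF hG

lemma compl (hF : DefinableFamily A L F) : DefinableFamily A L fun v => (F v)ᶜ :=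
  Definable.compl hF

lemma definable_nonempty (hF : DefinableFamily A L F) :
    A.Definable L {v | (F v).Nonempty} := by
  have hgraph : A.Definable L {w : β ⊕ Unit → M | w (.inr ()) ∈ F (w ∘ .inl)} :=
    hF.preimage_comp fun o : Option β => o.elim (Sum.inr ()) Sum.inl
  convert! hgraph.exists_of_finite using 1
  ext v
  exact ⟨fun ⟨y, hy⟩ => ⟨fun _ => y, hy⟩, fun ⟨u, hu⟩ => ⟨u (), hu⟩⟩

lemma comap (hF : DefinableFamily A L F) (σ : β → γ) :
    DefinableFamily A L fun v : γ → M => F (v ∘ σ) :=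
  hF.preimage_comp (Option.map σ)

lemma biUnion {α : Type*} [Finite α] {X : Set (α → M)} {F : (α → M) → (β → M) → Set M}
    (hX : A.Definable L X)
    (hF : DefinableFamily A L fun u : α ⊕ β → M => F (u ∘ .inl) (u ∘ .inr)) :
    DefinableFamily A L fun v => ⋃ x ∈ X, F x v := by
  have hmem : A.Definable L
      {w : Option β ⊕ α → M | w (.inl none) ∈ F (w ∘ .inr) (w ∘ .inl ∘ some)} :=
    hF.preimage_comp fun o : Option (α ⊕ β) =>
      o.elim (Sum.inl none) (Sum.elim Sum.inr (Sum.inl ∘ some))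
  rw [DefinableFamily]
  convert! ((hX.preimage_comp Sum.inr).inter hmem).exists_of_finite using 1
  ext w
  exact mem_iUnion₂.trans (exists_congr fun _ => exists_prop)

lemma definable_le_encard {β : Type*} {F : (β → M) → Set M} (hF : DefinableFamily A L F) (m : ℕ) :
    A.Definable L {v | m ≤ (F v).encard} := by
  induction m generalizing β F with
  | zero => simpa only [Nat.cast_zero, zero_le] using! definable_univ
  | succ m ih =>
    have hsingleton : DefinableFamily A L fun w : Option β → M => {w none} :=
      (DefinableFun.proj L).ofPred_eq (DefinableFun.proj L)
    have herase : DefinableFamily A L fun v => {p | m ≤ (F v \ {p}).encard} :=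
      ih ((hF.comap some).inter hsingleton.compl)
    convert! (hF.inter herase).definable_nonempty using 1
    ext v
    rw [mem_ofPred_eq, Nat.cast_add, Nat.cast_one]
    constructor
    · intro hv
      obtain ⟨p, hp⟩ := one_le_encard_iff_nonempty.1 (le_add_self.trans hv)
      refine ⟨p, hp, (ENat.add_le_add_iff_right ENat.one_ne_top).1 ?_⟩
      rwa [encard_sdiff_singleton_add_one hp]
    · rintro ⟨p, hp, hmp⟩
      rw [← encard_sdiff_singleton_add_one hp]
      exact (ENat.add_le_add_iff_right ENat.one_ne_top).2 hmp

lemma definable_encard_eq (hF : DefinableFamily A L F) (m : ℕ) :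
    A.Definable L {v | (F v).encard = m} := by
  convert! (hF.definable_le_encard m).sdiff (hF.definable_le_encard (m + 1)) using 1
  ext v
  simp only [Set.mem_sdiff, mem_ofPred_eq, Nat.cast_add, Nat.cast_one,
    ENat.add_one_le_iff (ENat.natCast_ne_top m), not_lt]
  exact le_antisymm_iff.trans and_comm

lemma definable_fiber [Finite β] (hF : DefinableFamily univ L F) (v : β → M) :
    (univ : Set M).Definable₁ L (F v) := by
  have hpoint : univ.DefinableMap L fun (x : Fin 1 → M) (o : Option β) => o.elim (x 0) v := by
    rintro (_ | i)
    exacts [DefinableFun.proj L, L.definableFun_const _ (mem_univ _)]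
  exact Definable.preimage_map hpoint hF

end DefinableFamily

lemma definableFamily_sumElim_optionElim {α κ : Type*} {R : Set (α ⊕ Option κ → M)}
    (hR : A.Definable L R) : DefinableFamily A L fun u : α ⊕ κ → M =>
      {y | Sum.elim (u ∘ .inl) (fun o : Option κ => o.elim y (u ∘ .inr)) ∈ R} := by
  rw [DefinableFamily]
  convert! hR.preimage_comp (Sum.elim (some ∘ Sum.inl) (Option.map Sum.inr)) using 1
  ext w
  have hw : Sum.elim (w ∘ some ∘ Sum.inl)
      (fun o : Option κ => o.elim (w none) (w ∘ some ∘ Sum.inr)) =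
        w ∘ Sum.elim (some ∘ Sum.inl) (Option.map Sum.inr) := by
    ext (_ | _ | _) <;> rfl
  exact (congrArg (· ∈ R) hw).to_iff

end DefinableFamily

namespace IsOMinimal

variable {L : FirstOrder.Language} {M : Type*} [L.Structure M] [LinearOrder M] {A : Set M}
  {β : Type*} {F : (β → M) → Set M}

lemma definable_ofPred_lt (hM : IsOMinimal L M) {f g : (β → M) → M} (hf : A.DefinableFun L f)
    (hg : A.DefinableFun L g) : A.Definable L {v | f v < g v} := by
  have hfg : A.DefinableMap L fun v => ![f v, g v] := by simp [DefinableMap, *]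
  exact (hM.definable_lt.mono (empty_subset A)).preimage_map hfg

lemma isFinUnionPointsIntervals_fiber [Finite β] (hM : IsOMinimal L M)
    (hF : DefinableFamily univ L F) (v : β → M) : IsFinUnionPointsIntervals (F v) :=
  hM.tame _ (hF.definable_fiber v)

lemma definableFamily_cell (hM : IsOMinimal L M) (hF : DefinableFamily A L F) (m n : ℕ) :
    DefinableFamily A L fun v => cell (F v) m n := by
  have hIio : DefinableFamily A L fun w : Option β → M => Iio (w none) :=
    hM.definable_ofPred_lt (DefinableFun.proj L) (DefinableFun.proj L)
  have hIic : DefinableFamily A L fun w : Option β → M => Iic (w none) := by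
    simp only [← compl_Ioi]
    exact DefinableFamily.compl
      (hM.definable_ofPred_lt (DefinableFun.proj L) (DefinableFun.proj L))
  exact (((hF.comap some).inter hIio).definable_encard_eq m).inter
    (((hF.comap some).inter hIic).definable_encard_eq n)

section Topology

variable [TopologicalSpace M] [OrderTopology M]

lemma definableFamily_closure (hM : IsOMinimal L M) (hF : DefinableFamily A L F) :
    DefinableFamily A L fun v => closure (F v) := by
  have := hM.noMinOrder
  have := hM.noMaxOrder
  have hIoo : DefinableFamily A L fun w : Option β ⊕ Fin 2 → M => Ioo (w (.inr 0)) (w (.inr 1)) :=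
    (hM.definable_ofPred_lt (DefinableFun.proj L) (DefinableFun.proj L)).inter
      (hM.definable_ofPred_lt (DefinableFun.proj L) (DefinableFun.proj L))
  have hmeets : A.Definable L {w : Option β ⊕ Fin 2 → M |
      (F (w ∘ .inl ∘ some) ∩ Ioo (w (.inr 0)) (w (.inr 1))).Nonempty} :=
    ((hF.comap (Sum.inl ∘ some)).inter hIoo).definable_nonempty
  have hnhds : A.Definable L {w : Option β ⊕ Fin 2 → M |
      w (.inl none) ∈ Ioo (w (.inr 0)) (w (.inr 1))} :=
    (hM.definable_ofPred_lt (DefinableFun.proj L) (DefinableFun.proj L)).inter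
      (hM.definable_ofPred_lt (DefinableFun.proj L) (DefinableFun.proj L))
  rw [DefinableFamily]
  convert! (hnhds.himp hmeets).forall_of_finite using 1
  ext w
  refine (mem_closure_iff_nhds_basis' (nhds_basis_Ioo (w none))).trans ?_
  simp only [inter_comm (Ioo _ _)]
  exact ⟨fun h u hu => h (u 0, u 1) hu, fun h p hp => h ![p.1, p.2] hp⟩

lemma definableFamily_frontier (hM : IsOMinimal L M) (hF : DefinableFamily A L F) :
    DefinableFamily A L fun v => frontier (F v) := by
  simp only [frontier_eq_closure_inter_closure]
  exact (hM.definableFamily_closure hF).inter (hM.definableFamily_closure hF.compl)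

variable {α κ : Type*} [Finite α] {X : Set (α → M)} {F : (α → M) → (κ → M) → Set M}

lemma definableFamily_biUnion_frontier (hM : IsOMinimal L M) (hX : A.Definable L X)
    (hF : DefinableFamily A L fun u : α ⊕ κ → M => F (u ∘ .inl) (u ∘ .inr)) :
    DefinableFamily A L fun b => ⋃ x ∈ X, frontier (F x b) :=
  .biUnion hX (hM.definableFamily_frontier hF)

lemma definableFamily_breakpoints (hM : IsOMinimal L M) (hX : A.Definable L X)
    (hF : DefinableFamily A L fun u : α ⊕ κ → M => F (u ∘ .inl) (u ∘ .inr)) :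
    DefinableFamily A L fun u : α ⊕ κ → M => breakpoints X (F · (u ∘ .inr)) (u ∘ .inl) :=
  (hM.definableFamily_frontier hF).union <| DefinableFamily.comap
    (hM.definableFamily_frontier (hM.definableFamily_biUnion_frontier hX hF)) Sum.inr

lemma exists_cell_breakpoints_inter_nonempty_iff_mem [Finite κ] (hM : IsOMinimal L M)
    (hX : univ.Definable L X) (hXne : X.Nonempty)
    (hF : DefinableFamily univ L fun u : α ⊕ κ → M => F (u ∘ .inl) (u ∘ .inr))
    (b : κ → M) (y : M) :
    ∃ x₀ ∈ X, ∃ m n, ∀ x ∈ X,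
      (cell (breakpoints X (F · b) x₀) m n ∩ F x b).Nonempty ↔ y ∈ F x b := by
  have := hM.denselyOrdered
  have := hM.noMinOrder
  have := hM.noMaxOrder
  have hfiber (x : α → M) : IsFinUnionPointsIntervals (F x b) :=
    hM.isFinUnionPointsIntervals_fiber hF (Sum.elim x b)
  have hfrontiers : IsFinUnionPointsIntervals (⋃ x ∈ X, frontier (F x b)) :=
    hM.isFinUnionPointsIntervals_fiber (hM.definableFamily_biUnion_frontier hX hF) b
  exact exists_cell_inter_nonempty_iff_mem hXne
    (fun x _ => (hfiber x).finite_frontier.union hfrontiers.finite_frontier)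
    (fun x _ => (hfiber x).subdivides_frontier) hfrontiers.subdivides_frontier y

end Topology

end IsOMinimal

section Traces

variable {L : FirstOrder.Language} {M : Type*} {α κ : Type*}

/-- The traces on `X` of the family of sets `R(·, b)` with parameter tuple `b`. -/
def traces (X : Set (α → M)) (R : Set (α ⊕ κ → M)) : Set (Set (α → M)) :=
  range fun b : κ → M => {x ∈ X | Sum.elim x b ∈ R}

variable [L.Structure M] [LinearOrder M] [Finite α] [Finite κ] {X : Set (α → M)}

/-- The trace of `F · b` at `y` is recovered from `b` alone once a point of `X` and the two numbers
describing the cell of `y` are known, so that `y` can be traded for a second copy of `X`. -/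
lemma IsOMinimal.countable_range_of_countable_traces (hM : IsOMinimal L M)
    (htraces : ∀ {Y : Set (α ⊕ α → M)}, Y.Countable → univ.Definable L Y →
      ∀ {R : Set ((α ⊕ α) ⊕ κ → M)}, univ.Definable L R → (traces Y R).Countable)
    (hXc : X.Countable) (hX : univ.Definable L X) {F : (α → M) → (κ → M) → Set M}
    (hF : DefinableFamily univ L fun u : α ⊕ κ → M => F (u ∘ .inl) (u ∘ .inr)) :
    (range fun p : (κ → M) × M => {x ∈ X | p.2 ∈ F x p.1}).Countable := by
  rcases X.eq_empty_or_nonempty with rfl | hXne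
  · simp only [mem_empty_iff_false, false_and, ofPred_false]
    exact (countable_singleton ∅).mono range_const_subset
  let _ : TopologicalSpace M := Preorder.topology M
  have : OrderTopology M := ⟨rfl⟩
  let Y : Set (α ⊕ α → M) := {w | w ∘ .inl ∈ X ∧ w ∘ .inr ∈ X}
  have hYc : Y.Countable := by
    refine ((hXc.prod hXc).image fun q => Sum.elim q.1 q.2).mono fun w hw => ?_
    exact ⟨(_, _), hw, Sum.elim_comp_inl_inr w⟩
  have hY : univ.Definable L Y := (hX.preimage_comp Sum.inl).inter (hX.preimage_comp Sum.inr)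
  let R (m n : ℕ) : Set ((α ⊕ α) ⊕ κ → M) := {w |
    (cell (breakpoints X (F · (w ∘ .inr)) (w ∘ .inl ∘ .inr)) m n ∩
      F (w ∘ .inl ∘ .inl) (w ∘ .inr)).Nonempty}
  have hR (m n : ℕ) : univ.Definable L (R m n) :=
    ((hM.definableFamily_cell ((hM.definableFamily_breakpoints hX hF).comap
      (Sum.map Sum.inr id)) m n).inter (hF.comap (Sum.map Sum.inl id))).definable_nonempty
  refine (countable_iUnion fun m => countable_iUnion fun n => hXc.biUnion fun x₀ _ =>
    (htraces hYc hY (hR m n)).image fun S => {x | Sum.elim x x₀ ∈ S}).mono ?_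
  rintro _ ⟨⟨b, y⟩, rfl⟩
  obtain ⟨x₀, hx₀, m, n, hcell⟩ :=
    hM.exists_cell_breakpoints_inter_nonempty_iff_mem hX hXne hF b y
  simp only [mem_iUnion]
  refine ⟨m, n, x₀, hx₀, _, ⟨b, rfl⟩, ?_⟩
  ext x
  exact ⟨fun ⟨⟨hx, _⟩, hxR⟩ => ⟨hx, (hcell x hx).1 hxR⟩,
    fun ⟨hx, hxy⟩ => ⟨⟨hx, hx₀⟩, (hcell x hx).2 hxy⟩⟩

theorem IsOMinimal.countable_traces (hM : IsOMinimal L M) (hXc : X.Countable)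
    (hX : univ.Definable L X) {R : Set (α ⊕ κ → M)} (hR : univ.Definable L R) :
    (traces X R).Countable := by
  induction κ using Finite.induction_empty_option generalizing α with
  | of_equiv e ih =>
    refine (ih hXc hX (hR.preimage_comp (Sum.map id e.symm))).mono ?_
    rintro _ ⟨b, rfl⟩
    refine ⟨b ∘ e, ?_⟩
    ext x
    simp [Sum.elim_comp_map, Function.comp_assoc]
  | h_empty => exact (finite_range _).countable
  | h_option ih =>
    refine (hM.countable_range_of_countable_traces ih hXc hX
      (F := fun x b => {y | Sum.elim x (fun o => o.elim y b) ∈ R})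
      (definableFamily_sumElim_optionElim hR)).mono ?_
    rintro _ ⟨b, rfl⟩
    refine ⟨(b ∘ some, b none), ?_⟩
    have hb : (fun o : Option _ => o.elim (b none) (b ∘ some)) = b :=
      funext (Option.rec rfl fun _ => rfl)
    simp only [mem_ofPred_eq, hb]

end Traces

lemma IsDefinableTopSpace.secondCountableTopology {L : FirstOrder.Language} {M : Type*}
    [L.Structure M] [LinearOrder M] (hM : IsOMinimal L M) {n : ℕ} {A : Set (Fin n → M)}
    {t : TopologicalSpace A} (h : IsDefinableTopSpace L A t) (hA : A.Countable) :
    @SecondCountableTopology A t := by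
  obtain ⟨hAdef, k, ψ, S, -, hbasis⟩ := h
  have hψ : univ.Definable L {w : Fin n ⊕ Fin k → M | ψ.Realize w} :=
    (empty_definable_iff.2 ⟨ψ, rfl⟩).mono (empty_subset univ)
  refine hbasis.secondCountableTopology <|
    ((hM.countable_traces hA hAdef hψ).image (Subtype.val ⁻¹' ·)).mono ?_
  rintro _ ⟨b, -, rfl⟩
  refine ⟨_, ⟨b, rfl⟩, ?_⟩
  ext x
  exact and_iff_right x.2

/-- No topological space definable in an o-minimal structure is homeomorphic to the
one-point compactification of `ℚ` (with `ℚ` carrying its usual topology). -/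
theorem no_definable_top_space_homeomorphic_to_onePoint_rat
    {L : FirstOrder.Language.{u, u}} {M : Type u} [L.Structure M] [LinearOrder M]
    (hM : IsOMinimal L M) {n : ℕ} (A : Set (Fin n → M)) (t : TopologicalSpace A)
    (h : IsDefinableTopSpace L A t) :
    IsEmpty (@Homeomorph A (OnePoint ℚ) t _) := by
  refine ⟨fun e => Rat.not_secondCountableTopology_opc ?_⟩
  have hOnePoint : Countable (OnePoint ℚ) := inferInstanceAs (Countable (Option ℚ))
  have hA : A.Countable := countable_coe_iff.1 (e.toEquiv.countable_iff.2 hOnePoint)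
  have := h.secondCountableTopology hM hA
  exact e.symm.secondCountableTopology
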